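/- Let m ∈ ℂ ∖ ℤ. Then the 1d Macdonald function 𝓚_m(r) := (𝓘_{−m}(r) − 𝓘_m(r))/sin(πm) satisfies the asymptotics e^{r} · 𝓚_m(r) → 1 as r → ∞ along the positive real axis. -/

import Mathlib

open Complex Filter

/-- Olver-normalized hypergeometric function `₀𝐅₁(c; w) = ∑ wⁿ/(n! Γ(c+n))`. -/
noncomputable def zeroF1reg (c w : ℂ) : ℂ :=
  ∑' n : ℕ, w ^ n / ((n.factorial : ℂ) * Complex.Gamma (c + n))

/-- Hyperbolic 1d Bessel function `𝓘_m(z) = √π (z/2)^{1/2+m} ₀𝐅₁(m+1; z²/4)`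
(principal branch powers). -/
noncomputable def besselI1d (m z : ℂ) : ℂ :=
  (Real.sqrt Real.pi : ℂ) * (z / 2) ^ ((1 : ℂ) / 2 + m) * zeroF1reg (m + 1) (z ^ 2 / 4)

/-- 1d Macdonald function `𝓚_m(z) = (𝓘_{-m}(z) - 𝓘_m(z))/sin(π m)` for `m ∉ ℤ`. -/
noncomputable def macdonaldK1d (m z : ℂ) : ℂ :=
  (besselI1d (-m) z - besselI1d m z) / Complex.sin (Real.pi * m)


lemma zF_summable (c w : ℂ) :
    Summable (fun n : ℕ => w ^ n / ((n.factorial : ℂ) * Complex.Gamma (c + n))) := by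
  refine summable_of_ratio_norm_eventually_le (r := 1/2) (by norm_num) ?_
  have h1 : Tendsto (fun n : ℕ => (n : ℝ)) atTop atTop := tendsto_natCast_atTop_atTop
  filter_upwards [h1.eventually_ge_atTop (‖c‖ + 1), h1.eventually_ge_atTop (2 * ‖w‖)] with n hn hn2
  have h2 : 1 ≤ ‖c + n‖ := by
    have := norm_sub_norm_le (n : ℂ) (-c)
    simp only [sub_neg_eq_add, norm_neg, Complex.norm_natCast] at this
    rw [add_comm]; linarith
  have e := Complex.one_div_Gamma_eq_self_mul_one_div_Gamma_add_one (c + n)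
  have h3 : w ^ n / ((n.factorial : ℂ) * Complex.Gamma (c + n)) * w
      = (n + 1) * (c + n) * (w ^ (n+1) / (((n+1).factorial : ℂ) * Complex.Gamma (c + (n+1 : ℕ)))) := by
    rw [div_eq_mul_inv, mul_inv, e, Nat.factorial_succ]
    push_cast
    rw [← add_assoc]
    have : (n : ℂ) + 1 ≠ 0 := Nat.cast_add_one_ne_zero n
    have : (n.factorial : ℂ) ≠ 0 := by exact_mod_cast n.factorial_ne_zero
    field_simp
    ring
  set A := w ^ n / ((n.factorial : ℂ) * Complex.Gamma (c + n))
  set B := (w ^ (n+1) / (((n+1).factorial : ℂ) * Complex.Gamma (c + (n+1 : ℕ))))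
  have h4 := congrArg norm h3
  rw [norm_mul, norm_mul, norm_mul] at h4
  have h5 : ‖(n : ℂ) + 1‖ = n + 1 := by exact_mod_cast Complex.norm_natCast (n+1)
  rw [h5] at h4
  have h6 : (n + 1 : ℝ) * ‖B‖ ≤ (n+1) * ‖c + n‖ * ‖B‖ := by
    have : (n + 1 : ℝ) * 1 ≤ (n+1) * ‖c + n‖ := by gcongr
    rw [mul_one] at this
    gcongr
  have h7 : ‖A‖ * ‖w‖ ≤ ‖A‖ * ((n+1)/2) := by gcongr; linarith
  have hp : (0:ℝ) < n + 1 := by positivity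
  have : (n+1 : ℝ) * ‖B‖ ≤ (n+1) * (1/2 * ‖A‖) := by linarith
  exact le_of_mul_le_mul_left this hp

lemma zF_hasDerivAt (c w : ℂ) : HasDerivAt (zeroF1reg c) (zeroF1reg (c+1) w) w := by
  set R : ℝ := ‖w‖ + 1
  have hu := (zF_summable c (R : ℂ)).norm
  have hd : ∀ n : ℕ, DifferentiableOn ℂ
      (fun w : ℂ => w ^ n / ((n.factorial : ℂ) * Complex.Gamma (c + n))) (Metric.ball 0 R) := by
    intro n; fun_prop
  have hb : ∀ (n : ℕ) (z : ℂ), z ∈ Metric.ball (0:ℂ) R →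
      ‖z ^ n / ((n.factorial : ℂ) * Complex.Gamma (c + n))‖ ≤
      ‖(R:ℂ) ^ n / ((n.factorial : ℂ) * Complex.Gamma (c + n))‖ := by
    intro n z hz
    rw [mem_ball_zero_iff] at hz
    rw [norm_div, norm_div, norm_pow, norm_pow, Complex.norm_real, Real.norm_of_nonneg (by positivity)]
    gcongr
  have hw : w ∈ Metric.ball (0:ℂ) R := by simp [R]
  have h1 := Complex.hasSum_deriv_of_summable_norm hu hd Metric.isOpen_ball hb hw
  have h2 := (Complex.differentiableOn_tsum_of_summable_norm hu hd Metric.isOpen_ball hb).differentiableAt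
    (Metric.isOpen_ball.mem_nhds hw)
  have h3 : deriv (zeroF1reg c) w = zeroF1reg (c+1) w := by
    have h4 := h1.tsum_eq
    rw [h1.summable.tsum_eq_zero_add] at h4
    change _ = deriv (zeroF1reg c) w at h4
    rw [← h4]
    unfold zeroF1reg
    simp only [deriv_div_const, pow_zero, deriv_const, zero_div, zero_add]
    refine tsum_congr fun n => ?_
    rw [Nat.factorial_succ]
    simp only [deriv_pow_field]
    push_cast
    have : (n : ℂ) + 1 ≠ 0 := Nat.cast_add_one_ne_zero n
    rw [show c + ((n:ℂ) + 1) = c + 1 + n by ring, mul_assoc, mul_div_mul_left _ _ this]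
  rw [← h3]
  exact h2.hasDerivAt

lemma zF_rec (c w : ℂ) : zeroF1reg c w = c * zeroF1reg (c+1) w + w * zeroF1reg (c+2) w := by
  have s1 := zF_summable c w
  have s2 := zF_summable (c+1) w
  have s3 := zF_summable (c+2) w
  have hd : w * zeroF1reg (c+2) w = ∑' n : ℕ, (n : ℂ) * (w ^ n / ((n.factorial : ℂ) * Complex.Gamma (c + 1 + n))) := by
    have key : ∀ n : ℕ, ((n+1 : ℕ) : ℂ) * (w ^ (n+1) / (((n+1).factorial : ℂ) * Complex.Gamma (c + 1 + (n+1 : ℕ))))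
        = w * (w ^ n / ((n.factorial : ℂ) * Complex.Gamma (c + 2 + n))) := by
      intro n
      rw [Nat.factorial_succ]
      push_cast
      have : (n : ℂ) + 1 ≠ 0 := Nat.cast_add_one_ne_zero n
      rw [show c + 1 + ((n:ℂ) + 1) = c + 2 + n by ring, mul_assoc, ← mul_div_assoc, mul_div_mul_left _ _ this]
      ring
    have s4 : Summable (fun n : ℕ => (n : ℂ) * (w ^ n / ((n.factorial : ℂ) * Complex.Gamma (c + 1 + n)))) := by
      rw [← summable_nat_add_iff 1]
      simp_rw [key]
      exact s3.mul_left _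
    rw [s4.tsum_eq_zero_add]
    simp_rw [key]
    rw [tsum_mul_left]
    simp [zeroF1reg]
  have s5 : Summable (fun n : ℕ => (n : ℂ) * (w ^ n / ((n.factorial : ℂ) * Complex.Gamma (c + 1 + n)))) := by
    have := s1.sub (s2.mul_left c)
    refine this.congr fun n => ?_
    have e := Complex.one_div_Gamma_eq_self_mul_one_div_Gamma_add_one (c + n)
    rw [div_eq_mul_inv, mul_inv, e, show c + (n:ℂ) + 1 = c + 1 + n by ring]
    ring
  rw [hd]
  unfold zeroF1reg
  rw [← tsum_mul_left, ← (s2.mul_left c).tsum_add s5]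
  refine tsum_congr fun n => ?_
  have e := Complex.one_div_Gamma_eq_self_mul_one_div_Gamma_add_one (c + n)
  rw [div_eq_mul_inv, mul_inv, e, show c + (n:ℂ) + 1 = c + 1 + n by ring]
  ring

lemma zF_zero (c : ℂ) : zeroF1reg c 0 = (Complex.Gamma c)⁻¹ := by
  unfold zeroF1reg
  rw [tsum_eq_single 0]
  · simp
  · intro n hn; simp [hn]

lemma zF_wronskian (m w : ℂ) :
    zeroF1reg (m+1) w * zeroF1reg (-m) w - w * (zeroF1reg (m+2) w * zeroF1reg (1-m) w)
      = - Complex.sin (Real.pi * m) / Real.pi := by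
  set Q : ℂ → ℂ := fun w =>
    zeroF1reg (m+1) w * zeroF1reg (-m) w - w * (zeroF1reg (m+2) w * zeroF1reg (1-m) w) with hQ
  have hd : ∀ w, HasDerivAt Q 0 w := by
    intro w
    have h := ((zF_hasDerivAt (m+1) w).mul (zF_hasDerivAt (-m) w)).sub
      ((hasDerivAt_id w).mul ((zF_hasDerivAt (m+2) w).mul (zF_hasDerivAt (1-m) w)))
    refine h.congr_deriv ?_
    have e1 := zF_rec (m+1) w
    have e2 := zF_rec (-m) w
    rw [show m + 1 + 1 = m + 2 by ring, show m + 1 + 2 = m + 3 by ring] at *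
    rw [show m + 2 + 1 = m + 3 by ring, show -m + 1 = 1 - m by ring, show 1 - m + 1 = 2 - m by ring] at *
    rw [show -m + 2 = 2 - m by ring] at e2
    simp only [id, Pi.mul_apply, one_mul]
    rw [e1, e2]
    ring
  have hc := is_const_of_deriv_eq_zero (fun w => (hd w).differentiableAt) (fun w => (hd w).deriv) w 0
  change Q w = _
  rw [hc]
  simp only [hQ, zF_zero, zero_mul, sub_zero]
  have := Complex.Gamma_mul_Gamma_one_sub (-m)
  rw [← mul_inv, mul_comm, show m + 1 = 1 - -m by ring, this, inv_div]
  simp [neg_div]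

lemma bI_rec (m : ℂ) {r : ℝ} (hr : 0 < r) :
    besselI1d (m-1) r = besselI1d (m+1) r + (2 * m / r) * besselI1d m r := by
  have hz : (r : ℂ) / 2 ≠ 0 := by
    have : (r : ℂ) ≠ 0 := by exact_mod_cast hr.ne'
    simpa using this
  have hr' : (r : ℂ) ≠ 0 := by exact_mod_cast hr.ne'
  unfold besselI1d
  have e := zF_rec m ((r:ℂ)^2/4)
  rw [show m - 1 + 1 = m by ring, e, show m + 1 + 1 = m + 2 by ring,
    show (1:ℂ)/2 + (m-1) = (1/2 + m) - 1 by ring, show (1:ℂ)/2 + (m+1) = (1/2 + m) + 1 by ring,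
    Complex.cpow_sub (1/2+m) 1 hz, Complex.cpow_add (1/2+m) 1 hz, Complex.cpow_one]
  generalize ((r:ℂ)/2)^((1:ℂ)/2+m) = P
  field_simp
  ring

lemma bI_hasDerivAt (m : ℂ) {r : ℝ} (hr : 0 < r) :
    HasDerivAt (fun x : ℝ => besselI1d m x)
      ((1/2 + m) / r * besselI1d m r + besselI1d (m+1) r) r := by
  have hr' : (r : ℂ) ≠ 0 := by exact_mod_cast hr.ne'
  have hz : (r : ℂ) / 2 ≠ 0 := by simpa using hr'
  have hs : (r : ℂ) / 2 ∈ Complex.slitPlane := by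
    have : ((r/2 : ℝ) : ℂ) ∈ Complex.slitPlane := Complex.ofReal_mem_slitPlane.2 (by positivity)
    simpa using this
  have h1 : HasDerivAt (fun z : ℂ => (z/2) ^ ((1:ℂ)/2 + m)) _ (r:ℂ) :=
    ((hasDerivAt_id (r:ℂ)).div_const 2).cpow_const (c := (1:ℂ)/2 + m) hs
  have h2 : HasDerivAt (fun z : ℂ => zeroF1reg (m+1) (z^2/4)) _ (r:ℂ) :=
    HasDerivAt.comp (h₂ := zeroF1reg (m+1)) (h := fun z : ℂ => z^2/4) (r:ℂ) (zF_hasDerivAt (m+1) ((r:ℂ)^2/4)) ((hasDerivAt_pow 2 (r:ℂ)).div_const 4)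
  have h3 := ((h1.const_mul (Real.sqrt Real.pi : ℂ)).mul h2).comp_ofReal
  refine HasDerivAt.congr_deriv (f := fun x : ℝ => besselI1d m x) h3 ?_
  unfold besselI1d
  rw [show (1:ℂ)/2 + (m+1) = (1/2 + m) + 1 by ring]
  simp only [id]
  rw [Complex.cpow_sub (1/2+m) 1 hz, Complex.cpow_add (1/2+m) 1 hz, Complex.cpow_one,
    show m + 1 + 1 = m + 2 by ring]
  generalize ((r:ℂ)/2)^((1:ℂ)/2+m) = P
  push_cast
  field_simp
  try ring

lemma bI_wronskian (m : ℂ) {r : ℝ} (hr : 0 < r) :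
    besselI1d m r * besselI1d (-m-1) r - besselI1d (m+1) r * besselI1d (-m) r
      = - Complex.sin (Real.pi * m) := by
  have hr' : (r : ℂ) ≠ 0 := by exact_mod_cast hr.ne'
  have hz : (r : ℂ) / 2 ≠ 0 := by simpa using hr'
  have e := zF_wronskian m ((r:ℂ)^2/4)
  have hpi : (Real.pi : ℂ) ≠ 0 := by exact_mod_cast Real.pi_ne_zero
  have hsq : (Real.sqrt Real.pi : ℂ) * (Real.sqrt Real.pi : ℂ) = Real.pi := by
    exact_mod_cast Real.mul_self_sqrt Real.pi_pos.le
  have ea : ((r:ℂ)/2) ^ ((1:ℂ)/2 + m) * ((r:ℂ)/2) ^ ((1:ℂ)/2 + (-m-1)) = 1 := by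
    rw [← Complex.cpow_add _ _ hz, show (1:ℂ)/2 + m + (1/2 + (-m-1)) = 0 by ring, Complex.cpow_zero]
  have eb : ((r:ℂ)/2) ^ ((1:ℂ)/2 + (m+1)) * ((r:ℂ)/2) ^ ((1:ℂ)/2 + -m) = (r:ℂ)^2/4 := by
    rw [← Complex.cpow_add _ _ hz, show (1:ℂ)/2 + (m+1) + (1/2 + (-m)) = (2:ℕ) by push_cast; ring,
      Complex.cpow_natCast]
    ring
  unfold besselI1d
  rw [eq_div_iff hpi] at e
  rw [← e, show m + 1 + 1 = m + 2 by ring, show -m - 1 + 1 = -m by ring, show -m + 1 = 1 - m by ring]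
  linear_combination (zeroF1reg (m+1) ((r:ℂ)^2/4) * zeroF1reg (-m) ((r:ℂ)^2/4) *
      (Real.sqrt Real.pi : ℂ) * (Real.sqrt Real.pi : ℂ)) * ea
    - (zeroF1reg (m+2) ((r:ℂ)^2/4) * zeroF1reg (1-m) ((r:ℂ)^2/4) *
      (Real.sqrt Real.pi : ℂ) * (Real.sqrt Real.pi : ℂ)) * eb
    + (zeroF1reg (m+1) ((r:ℂ)^2/4) * zeroF1reg (-m) ((r:ℂ)^2/4)
      - (r:ℂ)^2/4 * (zeroF1reg (m+2) ((r:ℂ)^2/4) * zeroF1reg (1-m) ((r:ℂ)^2/4))) * hsq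

lemma lhop_real {g g' : ℝ → ℝ} {L : ℝ} (hg : ∀ᶠ x in atTop, HasDerivAt g (g' x) x)
    (h0 : Tendsto g atTop (nhds 0))
    (hL : Tendsto (fun x => Real.exp (2*x) * g' x) atTop (nhds L)) :
    Tendsto (fun x => Real.exp (2*x) * g x) atTop (nhds (-L/2)) := by
  have hE : ∀ x : ℝ, HasDerivAt (fun x : ℝ => Real.exp (-(2*x))) (-2 * Real.exp (-(2*x))) x := by
    intro x
    have := (((hasDerivAt_id x).const_mul 2).neg).exp
    refine HasDerivAt.congr_deriv this ?_
    simp; ring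
  have h := HasDerivAt.lhopital_zero_atTop (l := nhds (-L/2)) hg (Eventually.of_forall hE)
    (Eventually.of_forall fun x => by simp [Real.exp_ne_zero]) h0
    (Real.tendsto_exp_neg_atTop_nhds_zero.comp (tendsto_id.const_mul_atTop (by norm_num : (0:ℝ) < 2)))
    (by
      have : Tendsto (fun x => (Real.exp (2*x) * g' x) * (-1/2)) atTop (nhds (L * (-1/2))) := hL.mul_const _
      rw [show -L/2 = L * (-1/2) by ring]
      refine this.congr fun x => ?_
      rw [Real.exp_neg]
      field_simp)
  refine h.congr fun x => ?_
  rw [Real.exp_neg]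
  field_simp

lemma lhop_complex {g g' : ℝ → ℂ} {L : ℂ} (hg : ∀ᶠ x in atTop, HasDerivAt g (g' x) x)
    (h0 : Tendsto g atTop (nhds 0))
    (hL : Tendsto (fun x => (Real.exp (2*x) : ℂ) * g' x) atTop (nhds L)) :
    Tendsto (fun x => (Real.exp (2*x) : ℂ) * g x) atTop (nhds (-L/2)) := by
  have hre := lhop_real (g := fun x => (g x).re) (g' := fun x => (g' x).re) (L := L.re)
    (hg.mono fun x hx => Complex.reCLM.hasFDerivAt.comp_hasDerivAt x hx)
    ((Complex.continuous_re.tendsto _).comp h0)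
    (((Complex.continuous_re.tendsto _).comp hL).congr fun x => Complex.re_ofReal_mul _ _)
  have him := lhop_real (g := fun x => (g x).im) (g' := fun x => (g' x).im) (L := L.im)
    (hg.mono fun x hx => Complex.imCLM.hasFDerivAt.comp_hasDerivAt x hx)
    ((Complex.continuous_im.tendsto _).comp h0)
    (((Complex.continuous_im.tendsto _).comp hL).congr fun x => Complex.im_ofReal_mul _ _)
  have h1 := (Complex.continuous_ofReal.tendsto _).comp hre
  have h2 := (Complex.continuous_ofReal.tendsto _).comp him
  have h3 := h1.add (h2.mul_const Complex.I)
  have e : ((-L.re/2 : ℝ) : ℂ) + ((-L.im/2 : ℝ) : ℂ) * Complex.I = -L/2 := by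
    conv_rhs => rw [← Complex.re_add_im L]
    push_cast; ring
  rw [e] at h3
  refine h3.congr fun x => ?_
  conv_rhs => rw [← Complex.re_add_im (g x)]
  simp only [Function.comp_def]
  push_cast; ring

lemma fact_gamma (n : ℕ) : (n.factorial : ℂ) * Complex.Gamma (n + 1/2) * 4 ^ n
    = (Real.sqrt Real.pi : ℂ) * ((2*n).factorial : ℂ) := by
  have h := Complex.Gamma_mul_Gamma_add_half ((n:ℂ) + 1/2)
  rw [show (n:ℂ) + 1/2 + 1/2 = n + 1 by ring, Complex.Gamma_nat_eq_factorial,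
    show 2 * ((n:ℂ) + 1/2) = (2 * n : ℕ) + 1 by push_cast; ring, Complex.Gamma_nat_eq_factorial,
    show (1:ℂ) - ((2 * n : ℕ) + 1) = -((2*n : ℕ) : ℂ) by push_cast; ring,
    Complex.cpow_neg, Complex.cpow_natCast, pow_mul] at h
  rw [mul_comm (n.factorial : ℂ), h]
  norm_num
  field_simp

lemma beta_moment (n : ℕ) (a : ℂ) : Complex.betaIntegral (n + 1/2) a
    = 2 * ∫ t in (0:ℝ)..1, (t:ℂ)^(2*n) * ((1 - t^2 : ℝ) : ℂ)^(a-1) := by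
  unfold Complex.betaIntegral
  rw [intervalIntegral.integral_of_le zero_le_one, intervalIntegral.integral_of_le zero_le_one,
    MeasureTheory.integral_Ioc_eq_integral_Ioo, MeasureTheory.integral_Ioc_eq_integral_Ioo]
  have him : (fun t : ℝ => t^2) '' Set.Ioo 0 1 = Set.Ioo 0 1 := by
    ext y
    constructor
    · rintro ⟨t, ⟨h0, h1⟩, rfl⟩
      exact ⟨by positivity, by simp only; nlinarith⟩
    · rintro ⟨h0, h1⟩
      refine ⟨Real.sqrt y, ⟨Real.sqrt_pos.2 h0, ?_⟩, Real.sq_sqrt h0.le⟩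
      rw [Real.sqrt_lt' one_pos]; simpa using h1
  have hinj : Set.InjOn (fun t : ℝ => t^2) (Set.Ioo 0 1) := by
    intro x hx y hy hxy
    exact (pow_left_inj₀ hx.1.le hy.1.le two_ne_zero).1 hxy
  have h := MeasureTheory.integral_image_eq_integral_abs_deriv_smul (s := Set.Ioo (0:ℝ) 1)
    (f := fun t : ℝ => t^2) (f' := fun t => 2 * t) measurableSet_Ioo
    (fun t _ => by simpa using (hasDerivAt_pow 2 t).hasDerivWithinAt) hinj
    (fun x : ℝ => (x : ℂ) ^ ((n:ℂ) + 1/2 - 1) * (1 - (x : ℂ)) ^ (a - 1))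
  rw [him] at h
  rw [h, ← MeasureTheory.integral_const_mul]
  refine MeasureTheory.setIntegral_congr_fun measurableSet_Ioo fun t ht => ?_
  have ht0 : (t:ℂ) ≠ 0 := by exact_mod_cast ht.1.ne'
  have e1 : (((t^2 : ℝ)) : ℂ) ^ ((n:ℂ) + 1/2 - 1) * t = (t:ℂ)^(2*n) := by
    have : (((t^2 : ℝ)) : ℂ) ^ ((n:ℂ) + 1/2 - 1) = (t:ℂ) ^ (2 * ((n:ℂ) + 1/2 - 1)) := by
      rw [pow_two, Complex.ofReal_mul, Complex.mul_cpow_ofReal_nonneg ht.1.le ht.1.le,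
        ← Complex.cpow_add _ _ ht0]
      congr 1; ring
    rw [this]
    nth_rewrite 2 [← Complex.cpow_one (t:ℂ)]
    rw [← Complex.cpow_add _ _ ht0, ← Complex.cpow_natCast]
    congr 1; push_cast; ring
  simp only [Complex.real_smul, abs_of_pos (mul_pos two_pos ht.1)]
  rw [← e1]
  push_cast
  ring

lemma zF_integral (a : ℂ) (ha : 1 < a.re) (r : ℝ) :
    zeroF1reg (a + 1/2) ((r:ℂ)^2/4) = (1 / ((Real.sqrt Real.pi : ℂ) * Complex.Gamma a)) *
      ∫ t in (0:ℝ)..1, 2 * Complex.cosh (r * t) * ((1 - t^2 : ℝ) : ℂ)^(a-1) := by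
  have hGa : Complex.Gamma a ≠ 0 := Complex.Gamma_ne_zero_of_re_pos (by linarith)
  have hpi : (Real.sqrt Real.pi : ℂ) ≠ 0 := by
    exact_mod_cast (Real.sqrt_pos.2 Real.pi_pos).ne'
  have hs : HasSum (fun n : ℕ => ∫ t in (0:ℝ)..1,
      2 * (((r:ℂ) * t)^(2*n) / ((2*n).factorial : ℂ)) * ((1 - t^2 : ℝ) : ℂ)^(a-1))
      (∫ t in (0:ℝ)..1, 2 * Complex.cosh (r * t) * ((1 - t^2 : ℝ) : ℂ)^(a-1)) := by
    refine intervalIntegral.hasSum_integral_of_dominated_convergence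
      (fun n _ => 2 * (|r|^(2*n) / ((2*n).factorial : ℝ))) ?_ ?_ ?_ ?_ ?_
    · intro n
      apply Measurable.aestronglyMeasurable
      fun_prop
    · intro n
      refine Eventually.of_forall fun t ht => ?_
      rw [Set.uIoc_of_le zero_le_one] at ht
      have h1 : ‖((1 - t^2 : ℝ) : ℂ)^(a-1)‖ ≤ 1 := by
        have : 0 ≤ 1 - t^2 := by nlinarith [ht.1, ht.2]
        rw [Complex.norm_cpow_eq_rpow_re_of_nonneg this (by simp; linarith)]
        refine Real.rpow_le_one this (by nlinarith [ht.1]) (by simp; linarith)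
      rw [norm_mul, norm_mul, norm_div, norm_pow, norm_mul, Complex.norm_real, Complex.norm_real,
        Complex.norm_natCast, Complex.norm_ofNat, Real.norm_eq_abs, Real.norm_eq_abs, abs_of_pos ht.1]
      have h2 : |r| * t ≤ |r| := mul_le_of_le_one_right (abs_nonneg _) ht.2
      have h3 : 0 ≤ |r| * t := mul_nonneg (abs_nonneg _) ht.1.le
      calc _ ≤ 2 * ((|r| * t)^(2*n) / ((2*n).factorial : ℝ)) * 1 := by gcongr
        _ ≤ _ := by rw [mul_one]; gcongr
    · exact Eventually.of_forall fun t _ => ((Real.hasSum_cosh |r|).summable).mul_left 2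
    · exact intervalIntegrable_const
    · refine Eventually.of_forall fun t _ => ?_
      exact ((Complex.hasSum_cosh ((r:ℂ) * t)).mul_left 2).mul_right _
  rw [← hs.tsum_eq, ← tsum_mul_left]
  unfold zeroF1reg
  refine tsum_congr fun n => ?_
  have e1 : (∫ t in (0:ℝ)..1,
      2 * (((r:ℂ) * t)^(2*n) / ((2*n).factorial : ℂ)) * ((1 - t^2 : ℝ) : ℂ)^(a-1))
      = (r:ℂ)^(2*n) / ((2*n).factorial : ℂ) * Complex.betaIntegral (n + 1/2) a := by
    rw [beta_moment, ← intervalIntegral.integral_const_mul, ← intervalIntegral.integral_const_mul]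
    congr 1; ext t; rw [mul_pow]; ring
  have e2 := Complex.Gamma_mul_Gamma_eq_betaIntegral (s := (n:ℂ) + 1/2) (t := a)
    (by simp; positivity) (by linarith)
  have e3 := fact_gamma n
  have hG3 : Complex.Gamma (a + 1/2 + n) ≠ 0 := by
    apply Complex.Gamma_ne_zero_of_re_pos
    simp; positivity
  rw [show (n:ℂ) + 1/2 + a = a + 1/2 + n by ring] at e2
  have hf : ((2*n).factorial : ℂ) ≠ 0 := by exact_mod_cast (2*n).factorial_ne_zero
  have hf' : (n.factorial : ℂ) ≠ 0 := by exact_mod_cast n.factorial_ne_zero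
  rw [e1, div_pow, ← pow_mul]
  generalize Complex.betaIntegral (n + 1/2) a = B at *
  generalize Complex.Gamma (a + 1/2 + n) = G3 at *
  generalize Complex.Gamma (n + 1/2) = G1 at *
  have e4 : B = G1 * Complex.Gamma a / G3 := by
    rw [e2]; field_simp
  rw [e4]
  field_simp
  linear_combination -(r:ℂ)^(2*n) * e3

lemma bI_asymp_int (a : ℂ) (ha : 1 < a.re) :
    Tendsto (fun r : ℝ => ∫ x in Set.Ioi (0:ℝ), Set.indicator (Set.Ioc 0 r)
      (fun x : ℝ => ((Real.exp (-x) + Real.exp (x - 2*r) : ℝ) : ℂ) * ((x * (2 - x/r) : ℝ) : ℂ)^(a-1)) x)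
      atTop (nhds (2^(a-1) * Complex.Gamma a)) := by
  have hG : (2:ℂ)^(a-1) * Complex.Gamma a =
      ∫ x in Set.Ioi (0:ℝ), ((Real.exp (-x) : ℝ) : ℂ) * ((x * 2 : ℝ) : ℂ)^(a-1) := by
    rw [Complex.Gamma_eq_integral (by linarith), Complex.GammaIntegral, ← MeasureTheory.integral_const_mul]
    refine MeasureTheory.setIntegral_congr_fun measurableSet_Ioi fun x hx => ?_
    rw [Complex.ofReal_mul, Complex.mul_cpow_ofReal_nonneg (le_of_lt hx) zero_le_two]
    push_cast; ring
  rw [hG]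
  refine MeasureTheory.tendsto_integral_filter_of_dominated_convergence
    (fun x => 2 * 2^(a.re-1) * (Real.exp (-x) * x^(a.re-1))) ?_ ?_ ?_ ?_
  · refine Eventually.of_forall fun r => ?_
    apply Measurable.aestronglyMeasurable
    refine Measurable.indicator ?_ measurableSet_Ioc
    fun_prop
  · filter_upwards [eventually_gt_atTop 0] with r hr
    refine (MeasureTheory.ae_restrict_iff' measurableSet_Ioi).2 (Eventually.of_forall fun x hx => ?_)
    have hx0 : 0 < x := hx
    by_cases h : x ∈ Set.Ioc 0 r
    · rw [Set.indicator_of_mem h]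
      have h1 : 0 ≤ x / r := by positivity
      have h2 : x / r ≤ 1 := (div_le_one hr).2 h.2
      have h3 : 0 < x * (2 - x/r) := mul_pos hx0 (by linarith)
      rw [norm_mul, Complex.norm_cpow_eq_rpow_re_of_pos h3, Complex.norm_real,
        Real.norm_of_nonneg (by positivity)]
      have h4 : Real.exp (x - 2*r) ≤ Real.exp (-x) := Real.exp_le_exp.2 (by linarith [h.2])
      have h5 : (x * (2 - x/r))^((a-1).re) ≤ (2 * x)^(a.re-1) := by
        simp only [Complex.sub_re, Complex.one_re]
        exact Real.rpow_le_rpow h3.le (by nlinarith) (by linarith)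
      rw [Real.mul_rpow two_pos.le hx0.le] at h5
      calc _ ≤ (Real.exp (-x) + Real.exp (-x)) * (2^(a.re-1) * x^(a.re-1)) := by gcongr
        _ = _ := by ring
    · rw [Set.indicator_of_notMem h, norm_zero]; positivity
  · exact (Real.GammaIntegral_convergent (by linarith)).const_mul _
  · refine (MeasureTheory.ae_restrict_iff' measurableSet_Ioi).2 (Eventually.of_forall fun x hx => ?_)
    have hx0 : 0 < x := hx
    have h1 : Tendsto (fun r : ℝ => Real.exp (-x) + Real.exp (x - 2*r)) atTop (nhds (Real.exp (-x) + 0)) := by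
      refine tendsto_const_nhds.add (Real.tendsto_exp_atBot.comp ?_)
      have : Tendsto (fun r : ℝ => 2 * r) atTop atTop := tendsto_id.const_mul_atTop two_pos
      simpa [sub_eq_add_neg] using tendsto_atBot_add_const_left atTop x (tendsto_neg_atTop_atBot.comp this)
    rw [add_zero] at h1
    have h2 : Tendsto (fun r : ℝ => x * (2 - x/r)) atTop (nhds (x * (2 - 0))) :=
      (tendsto_const_nhds.sub (tendsto_const_nhds.div_atTop tendsto_id)).const_mul x
    rw [sub_zero] at h2
    have h3 := ((Complex.continuous_ofReal.tendsto _).comp h2).cpow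
      (tendsto_const_nhds (x := a-1)) (Complex.ofReal_mem_slitPlane.2 (by positivity))
    refine (((Complex.continuous_ofReal.tendsto _).comp h1).mul h3).congr' ?_
    filter_upwards [eventually_ge_atTop x] with r hr
    rw [Set.indicator_of_mem (show x ∈ Set.Ioc 0 r from ⟨hx0, hr⟩)]
    rfl

lemma bI_eq (a : ℂ) (ha : 1 < a.re) {r : ℝ} (hr : 0 < r) :
    Complex.exp (-r) * besselI1d (a - 1/2) r = (1/2)^a / Complex.Gamma a *
      ∫ x in Set.Ioi (0:ℝ), Set.indicator (Set.Ioc 0 r)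
      (fun x : ℝ => ((Real.exp (-x) + Real.exp (x - 2*r) : ℝ) : ℂ) * ((x * (2 - x/r) : ℝ) : ℂ)^(a-1)) x := by
  have hr' : (r : ℂ) ≠ 0 := by exact_mod_cast hr.ne'
  have hGa : Complex.Gamma a ≠ 0 := Complex.Gamma_ne_zero_of_re_pos (by linarith)
  have hpi : (Real.sqrt Real.pi : ℂ) ≠ 0 := by
    exact_mod_cast (Real.sqrt_pos.2 Real.pi_pos).ne'
  rw [MeasureTheory.setIntegral_indicator measurableSet_Ioc,
    Set.inter_eq_self_of_subset_right (Set.Ioc_subset_Ioi_self),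
    ← intervalIntegral.integral_of_le hr.le]
  unfold besselI1d
  rw [show a - 1/2 + 1 = a + 1/2 by ring, zF_integral a ha r, show (1:ℂ)/2 + (a - 1/2) = a by ring]
  have hsub := intervalIntegral.integral_comp_sub_div (a := 0) (b := r)
    (fun t : ℝ => 2 * Complex.cosh (r * t) * ((1 - t^2 : ℝ) : ℂ)^(a-1)) hr.ne' 1
  rw [div_self hr.ne', sub_self, zero_div, sub_zero, Complex.real_smul] at hsub
  have hI : (∫ x in (0:ℝ)..r, ((Real.exp (-x) + Real.exp (x - 2*r) : ℝ) : ℂ) * ((x * (2 - x/r) : ℝ) : ℂ)^(a-1))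
      = Complex.exp (-r) * (r:ℂ)^(a-1) * ∫ x in (0:ℝ)..r,
        2 * Complex.cosh (r * ((1 - x/r : ℝ) : ℂ)) * ((1 - (1 - x/r)^2 : ℝ) : ℂ)^(a-1) := by
    rw [← intervalIntegral.integral_const_mul]
    refine intervalIntegral.integral_congr fun x hx => ?_
    rw [Set.uIcc_of_le hr.le] at hx
    have h2 : x / r ≤ 1 := (div_le_one hr).2 hx.2
    have h1 : 0 ≤ x / r := div_nonneg hx.1 hr.le
    have h3 : 0 ≤ 1 - (1 - x/r)^2 := by nlinarith
    rw [show x * (2 - x/r) = r * (1 - (1 - x/r)^2) by field_simp; ring, Complex.ofReal_mul,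
      Complex.mul_cpow_ofReal_nonneg hr.le h3]
    have e : ((Real.exp (-x) + Real.exp (x - 2*r) : ℝ) : ℂ)
        = Complex.exp (-r) * (2 * Complex.cosh (r * ((1 - x/r : ℝ) : ℂ))) := by
      rw [Complex.two_cosh, mul_add, ← Complex.exp_add, ← Complex.exp_add]
      push_cast
      congr 2
      · field_simp; ring
      · field_simp; ring
    rw [e]; ring
  rw [hI, hsub, Complex.cpow_sub _ _ hr', Complex.cpow_one,
    show (r:ℂ)/2 = (r:ℂ) * ((1/2 : ℝ) : ℂ) by push_cast; ring,
    Complex.mul_cpow_ofReal_nonneg hr.le (by norm_num)]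
  push_cast
  field_simp

lemma bI_asymp_pos (m : ℂ) (hm : 1/2 < m.re) :
    Tendsto (fun r : ℝ => Complex.exp (-r) * besselI1d m r) atTop (nhds (1/2)) := by
  set a := m + 1/2 with ha'
  have ha : 1 < a.re := by simp [ha']; norm_num; linarith
  have hGa : Complex.Gamma a ≠ 0 := Complex.Gamma_ne_zero_of_re_pos (by linarith)
  have h := (bI_asymp_int a ha).const_mul ((1/2)^a / Complex.Gamma a)
  have e : (1/2:ℂ)^a / Complex.Gamma a * (2^(a-1) * Complex.Gamma a) = 1/2 := by
    have h1 : (1/2:ℂ)^a * 2^a = 1 := by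
      have := Complex.mul_cpow_ofReal_nonneg (a := 1/2) (b := 2) (by norm_num) (by norm_num) a
      push_cast at this
      rw [← this]; norm_num
    rw [Complex.cpow_sub _ _ two_ne_zero, Complex.cpow_one]
    field_simp
    exact h1
  rw [e] at h
  refine h.congr' ?_
  filter_upwards [eventually_gt_atTop 0] with r hr
  rw [← bI_eq a ha hr, ha', add_sub_cancel_right]

lemma bI_asymp_step (m : ℂ)
    (h1 : Tendsto (fun r : ℝ => Complex.exp (-r) * besselI1d (m+1) r) atTop (nhds (1/2)))
    (h2 : Tendsto (fun r : ℝ => Complex.exp (-r) * besselI1d (m+2) r) atTop (nhds (1/2))) :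
    Tendsto (fun r : ℝ => Complex.exp (-r) * besselI1d m r) atTop (nhds (1/2)) := by
  have h3 : Tendsto (fun r : ℝ => 2 * (m+1) * ((r⁻¹ : ℝ) : ℂ)) atTop (nhds (2 * (m+1) * ((0:ℝ):ℂ))) :=
    ((Complex.continuous_ofReal.tendsto _).comp tendsto_inv_atTop_zero).const_mul _
  have h := h2.add (h3.mul h1)
  rw [Complex.ofReal_zero, mul_zero, zero_mul, add_zero] at h
  refine h.congr' ?_
  filter_upwards [eventually_gt_atTop 0] with r hr
  have e := bI_rec (m+1) hr
  rw [show m + 1 - 1 = m by ring, show m + 1 + 1 = m + 2 by ring] at e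
  rw [e]; push_cast; ring

lemma bI_asymp (m : ℂ) : Tendsto (fun r : ℝ => Complex.exp (-r) * besselI1d m r) atTop (nhds (1/2)) := by
  have key : ∀ n : ℕ, ∀ m : ℂ, 1/2 < m.re + n →
      Tendsto (fun r : ℝ => Complex.exp (-r) * besselI1d m r) atTop (nhds (1/2)) := by
    intro n
    induction n with
    | zero => intro m hm; exact bI_asymp_pos m (by simpa using hm)
    | succ k ih =>
      intro m hm
      push_cast at hm
      refine bI_asymp_step m (ih _ ?_) (ih _ ?_)
      · simp; norm_num at hm; linarith
      · simp; norm_num at hm; linarith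
  obtain ⟨n, hn⟩ := exists_nat_gt (1/2 - m.re)
  exact key n m (by linarith)

/-- for `m ∈ ℂ ∖ ℤ`, `e^r 𝓚_m(r) → 1` as `r → ∞` along the positive real
axis. -/
theorem macdonaldK1d_asymptotics (m : ℂ) (hm : ∀ n : ℤ, m ≠ (n : ℂ)) :
    Tendsto (fun r : ℝ => Complex.exp r * macdonaldK1d m r) atTop (nhds 1) := by
  have hsin : Complex.sin (Real.pi * m) ≠ 0 := by
    rw [Ne, Complex.sin_eq_zero_iff]
    rintro ⟨k, hk⟩
    have hpi : (Real.pi : ℂ) ≠ 0 := by exact_mod_cast Real.pi_ne_zero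
    refine hm k ?_
    rw [mul_comm] at hk
    exact mul_right_cancel₀ hpi hk
  set W : ℂ := - Complex.sin (Real.pi * m) with hW
  have hA := bI_asymp m
  have hB := bI_asymp (-m)
  have hne : ∀ᶠ r : ℝ in atTop, besselI1d m r ≠ 0 := by
    filter_upwards [hA.eventually_ne (by norm_num : (1/2 : ℂ) ≠ 0)] with r hr h
    simp [h] at hr
  set g : ℝ → ℂ := fun r => besselI1d (-m) r / besselI1d m r - 1 with hg
  have hg0 : Tendsto g atTop (nhds 0) := by
    have := (hB.div hA (by norm_num)).sub_const 1
    rw [div_self (by norm_num), sub_self] at this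
    refine this.congr fun r => ?_
    have := Complex.exp_ne_zero (-(r:ℂ))
    simp only [hg, Pi.div_apply]
    rw [mul_div_mul_left _ _ this]
  have hgd : ∀ᶠ r : ℝ in atTop, HasDerivAt g (W / (besselI1d m r)^2) r := by
    filter_upwards [hne, eventually_gt_atTop 0] with r hr hr0
    have h := ((bI_hasDerivAt (-m) hr0).div (bI_hasDerivAt m hr0) hr).sub_const 1
    refine HasDerivAt.congr_deriv (f := g) h ?_
    congr 1
    rw [hW, ← bI_wronskian m hr0]
    have e := bI_rec (-m) hr0
    have hr' : (r : ℂ) ≠ 0 := by exact_mod_cast hr0.ne'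
    rw [e]
    field_simp
    ring
  have hL : Tendsto (fun r : ℝ => (Real.exp (2*r) : ℂ) * (W / (besselI1d m r)^2)) atTop (nhds (4*W)) := by
    have h : Tendsto (fun r : ℝ => W / (Complex.exp (-r) * besselI1d m r)^2) atTop (nhds (W / (1/2)^2)) :=
      tendsto_const_nhds.div (hA.pow 2) (by norm_num)
    rw [show 4 * W = W / (1/2)^2 by ring]
    refine h.congr fun r => ?_
    push_cast
    rw [Complex.exp_neg, two_mul, Complex.exp_add]
    have := Complex.exp_ne_zero (r:ℂ)
    field_simp
  have h1 := ((lhop_complex hgd hg0 hL).mul hA).div_const (Complex.sin (Real.pi * m))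
  have e : -(4 * W) / 2 * (1/2) / Complex.sin (Real.pi * m) = 1 := by
    rw [hW]; field_simp; ring
  rw [e] at h1
  refine h1.congr' ?_
  filter_upwards [hne] with r hr
  unfold macdonaldK1d
  simp only [hg]
  push_cast
  rw [Complex.exp_neg, two_mul, Complex.exp_add]
  have := Complex.exp_ne_zero (r:ℂ)
  field_simp
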